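/- arXiv:gr-qc/9809054 — 2 statements merged into one kernel-verified Lean document; each statement's English description precedes it below -/
import Mathlib

section
/- Let f : ℝ² → ℝ be smooth, (ρ_ε)_{ε∈(0,1)} a generalized delta net, x_ε (ε < ε₀) the solutions of ẍ_ε = ½ ∇f(x_ε) ρ_ε with x_ε(−1) = x₀, ẋ_ε(−1) = ẋ₀, and v_ε the solutions of v̈_ε = f(x_ε) ρ̇_ε + 2 ∇f(x_ε)·ẋ_ε ρ_ε with v_ε(−1) = v₀, v̇_ε(−1) = v̇₀. Write x̂ := x₀ + ẋ₀. Then v_ε converges distributionally to v₀ + v̇₀(1+u) + f(x̂) θ(u) + [Σ_{i=1}^{2} ∂_i f(x̂)(ẋ₀^i + ¼ ∂_i f(x̂))] u₊: for every smooth compactly supported φ : ℝ → ℝ, ∫_ℝ v_ε(u) φ(u) du → ∫_ℝ (v₀ + v̇₀(1+u)) φ(u) du + f(x̂) ∫_0^∞ φ(u) du + [Σ_i ∂_i f(x̂)(ẋ₀^i + ¼ ∂_i f(x̂))] ∫_0^∞ u φ(u) du as ε → 0; i.e. the geodesic suffers a jump of magnitude f(x̂) and a kink in the v-direction at the shock.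 -/
open MeasureTheory Filter Set

/-- A generalized delta net: a family `(ρ ε)_{ε ∈ (0,1)}` of smooth functions with
(a') `supp ρ_ε ⊆ [-ε, ε]`, (b) `∫ ρ_ε → 1` as `ε → 0`, and (c) `∫ |ρ_ε|` uniformly bounded. -/
def IsGenDeltaNet (ρ : ℝ → ℝ → ℝ) : Prop :=
  (∀ ε ∈ Ioo (0:ℝ) 1, ContDiff ℝ (⊤ : ℕ∞) (ρ ε)) ∧
  (∀ ε ∈ Ioo (0:ℝ) 1, Function.support (ρ ε) ⊆ Icc (-ε) ε) ∧
  Tendsto (fun ε => ∫ x, ρ ε x) (nhdsWithin 0 (Ioo 0 1)) (nhds 1) ∧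
  ∃ C : ℝ, ∀ ε ∈ Ioo (0:ℝ) 1, (∫ x, |ρ ε x|) ≤ C

/-- The gradient of a function on `ℝ²`. -/
noncomputable def grad2 (f : ℝ × ℝ → ℝ) (p : ℝ × ℝ) : ℝ × ℝ :=
  (fderiv ℝ f p (1, 0), fderiv ℝ f p (0, 1))

/-- The Euclidean dot product on `ℝ²`. -/
def dot2 (a b : ℝ × ℝ) : ℝ := a.1 * b.1 + a.2 * b.2

/-- `x` is the (smooth, globally defined) solution of the regularized transverse geodesic
system `ẍ(u) = ½ ∇f(x(u)) ρ_ε(u)` with data `x(-1) = x₀`, `ẋ(-1) = xdot0`. -/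
def IsXSol (f : ℝ × ℝ → ℝ) (ρ : ℝ → ℝ → ℝ) (x₀ xdot0 : ℝ × ℝ) (ε : ℝ) (x : ℝ → ℝ × ℝ) : Prop :=
  ContDiff ℝ (⊤ : ℕ∞) x ∧ (∀ u, deriv (deriv x) u = (ρ ε u / 2) • grad2 f (x u)) ∧
  x (-1) = x₀ ∧ deriv x (-1) = xdot0

/-- `v` is the (smooth, globally defined) solution of the regularized `v`-equation
`v̈(u) = f(x(u)) ρ̇_ε(u) + 2 ∇f(x(u))·ẋ(u) ρ_ε(u)` with data `v(-1) = v₀`, `v̇(-1) = vdot0`. -/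
def IsVSol (f : ℝ × ℝ → ℝ) (ρ : ℝ → ℝ → ℝ) (x : ℝ → ℝ × ℝ) (v₀ vdot0 : ℝ) (ε : ℝ)
    (v : ℝ → ℝ) : Prop :=
  ContDiff ℝ (⊤ : ℕ∞) v ∧
  (∀ u, deriv (deriv v) u =
    f (x u) * deriv (ρ ε) u + 2 * dot2 (grad2 f (x u)) (deriv x u) * ρ ε u) ∧
  v (-1) = v₀ ∧ deriv v (-1) = vdot0

/-!
The forcing of the `v`-equation is a total derivative: since `ẍ = ½ ∇f(x) ρ`, its first integral is
`v̇ = v̇₀ + ρ f(x) + |ẋ|² - |ẋ₀|²`. A bootstrap argument, driven by the local boundedness of `∇f`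
and the uniform `L¹` bound on `ρ_ε`, squeezes `x_ε` to `x̂` on the support of `ρ_ε`. Hence
`ρ_ε f(x_ε)` acts as `f(x̂) δ`, which gives the jump, while `ẋ_ε` jumps by `½ ∇f(x̂)`, so that
`|ẋ_ε|²` jumps by `∇f(x̂)·(ẋ₀ + ¼ ∇f(x̂))`, which gives the kink. This proves convergence of `v_ε`
at every `u ≠ 0` together with a uniform linear growth bound, and dominated convergence concludes.
-/

open scoped Topology

theorem lt_of_continuousOn_Icc_of_forall_Ico {α β : Type*} [LinearOrder α] [TopologicalSpace α]
    [OrderClosedTopology α] [CompactIccSpace α] [LinearOrder β] [TopologicalSpace β]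
    [ClosedIciTopology β] {g : α → β} {a b : α} {R : β} (hg : ContinuousOn g (Icc a b))
    (hstep : ∀ t ∈ Icc a b, (∀ s ∈ Ico a t, g s < R) → g t < R) :
    ∀ t ∈ Icc a b, g t < R := by
  by_contra! ⟨t₁, ht₁, hR⟩
  have hcompact : IsCompact (Icc a b ∩ g ⁻¹' Ici R) :=
    isCompact_Icc.of_isClosed_subset (hg.preimage_isClosed_of_isClosed isClosed_Icc isClosed_Ici)
      inter_subset_left
  obtain ⟨t, ⟨ht, hRt⟩, hleast⟩ := hcompact.exists_isLeast ⟨t₁, ht₁, hR⟩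
  refine hRt.not_gt (hstep t ht fun s hs => ?_)
  by_contra! hRs
  exact hs.2.not_ge (hleast ⟨⟨hs.1, hs.2.le.trans ht.2⟩, hRs⟩)

section IntervalIntegral

variable {E : Type*} [NormedAddCommGroup E] [NormedSpace ℝ E]

theorem eq_add_intervalIntegral_deriv [CompleteSpace E] {y : ℝ → E} (hy : ContDiff ℝ 1 y)
    (a u : ℝ) : y u = y a + ∫ s in a..u, deriv y s := by
  rw [intervalIntegral.integral_deriv_eq_sub (fun t _ => hy.differentiable one_ne_zero t)
    ((hy.continuous_deriv le_rfl).intervalIntegrable _ _), add_sub_cancel]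

theorem norm_intervalIntegral_smul_le {r : ℝ → ℝ} {w : ℝ → E} {a b M : ℝ} (hr : Integrable r)
    (hM : 0 ≤ M) (hw : ∀ s ∈ uIoc a b, r s ≠ 0 → ‖w s‖ ≤ M) :
    ‖∫ s in a..b, r s • w s‖ ≤ M * ∫ s, |r s| := by
  have hbound : ∀ s ∈ uIoc a b, ‖r s • w s‖ ≤ M * |r s| := fun s hs => by
    rcases eq_or_ne (r s) 0 with h0 | h0
    · simp [h0]
    · rw [norm_smul, mul_comm, Real.norm_eq_abs]
      exact mul_le_mul_of_nonneg_right (hw s hs h0) (abs_nonneg _)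
  have hint : Integrable fun s => M * |r s| := hr.abs.const_mul M
  calc ‖∫ s in a..b, r s • w s‖ = ‖∫ s in uIoc a b, r s • w s‖ :=
        intervalIntegral.norm_intervalIntegral_eq _ _ _ _
    _ ≤ ∫ s in uIoc a b, M * |r s| := norm_integral_le_of_norm_le hint.integrableOn <|
        (ae_restrict_iff' measurableSet_uIoc).2 (Eventually.of_forall hbound)
    _ ≤ ∫ s, M * |r s| :=
        setIntegral_le_integral hint (Eventually.of_forall fun s => by positivity)
    _ = M * ∫ s, |r s| := integral_const_mul _ _

theorem intervalIntegral_indicator_Ioi_const [CompleteSpace E] {a : ℝ} (ha : a ≤ 0) (c : E)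
    (u : ℝ) : ∫ s in a..u, (Ioi (0 : ℝ)).indicator (fun _ => c) s
      = (Ioi (0 : ℝ)).indicator (fun s => s • c) u := by
  rcases le_or_gt u 0 with hu | hu
  · rw [indicator_of_notMem (notMem_Ioi.2 hu)]
    refine intervalIntegral.integral_zero_ae (Eventually.of_forall fun s hs => ?_)
    exact indicator_of_notMem (notMem_Ioi.2 (hs.2.trans (max_le ha hu))) _
  · rw [indicator_of_mem (mem_Ioi.2 hu), intervalIntegral.integral_of_le (ha.trans hu.le),
      setIntegral_indicator measurableSet_Ioi, Ioc_inter_Ioi, sup_eq_right.2 ha]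
    simp [hu.le]

end IntervalIntegral

/-- A regularized impulse of width `ε`: a continuous profile carried by `(-ε, ε) ⊆ (-1, 1)` with
`L¹` norm at most `C`. This is what the estimates use of one member of a generalized delta net; the
interval can be taken open because the support of a continuous function is open. -/
structure IsImpulse (r : ℝ → ℝ) (ε C : ℝ) : Prop where
  continuous : Continuous r
  support_subset : Function.support r ⊆ Ioo (-ε) ε
  integral_abs_le : ∫ s, |r s| ≤ C
  le_one : ε ≤ 1

namespace IsImpulse

variable {E : Type*} [NormedAddCommGroup E] [NormedSpace ℝ E] {r : ℝ → ℝ} {ε C : ℝ}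

theorem mass_nonneg (hr : IsImpulse r ε C) : 0 ≤ C :=
  (integral_nonneg fun _ => abs_nonneg _).trans hr.integral_abs_le

theorem integrable (hr : IsImpulse r ε C) : Integrable r :=
  hr.continuous.integrable_of_hasCompactSupport <|
    HasCompactSupport.of_support_subset_isCompact isCompact_Icc
      (hr.support_subset.trans Ioo_subset_Icc_self)

theorem eq_zero_of_le_neg (hr : IsImpulse r ε C) {u : ℝ} (hu : u ≤ -ε) : r u = 0 :=
  Function.notMem_support.1 fun h => (hr.support_subset h).1.not_ge hu

theorem integral_smul_eq_zero (hr : IsImpulse r ε C) (w : ℝ → E) {u : ℝ} (hu : u ≤ -ε) :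
    ∫ s in (-1)..u, r s • w s = 0 := by
  refine intervalIntegral.integral_zero_ae (Eventually.of_forall fun s hs => ?_)
  rw [hr.eq_zero_of_le_neg (hs.2.trans (max_le (neg_le_neg hr.le_one) hu)), zero_smul]

theorem integral_eq_integral (hr : IsImpulse r ε C) {u : ℝ} (hu : ε ≤ u) :
    ∫ s in (-1)..u, r s = ∫ s, r s :=
  intervalIntegral.integral_eq_integral_of_support_subset <|
    (hr.support_subset.trans (Ioo_subset_Ioo (neg_le_neg hr.le_one) hu)).trans Ioo_subset_Ioc_self

theorem norm_integral_smul_le (hr : IsImpulse r ε C) {w : ℝ → E} {u M : ℝ} (hM : 0 ≤ M)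
    (hw : ∀ s ∈ Ioo (-ε) ε, s ≤ u → ‖w s‖ ≤ M) :
    ‖∫ s in (-1)..u, r s • w s‖ ≤ M * C := by
  refine (norm_intervalIntegral_smul_le hr.integrable hM fun s hs h0 => ?_).trans
    (mul_le_mul_of_nonneg_left hr.integral_abs_le hM)
  have hsε := hr.support_subset h0
  refine hw s hsε ((le_max_iff.1 hs.2).resolve_left ?_)
  linarith [hsε.1, hr.le_one]

end IsImpulse

/-- The sector of pairs `(ε, u)` with `|u| < ε`. Convergence along `𝓝[impulseSector] 0` expresses
that a family `w ε u` converges as `ε → 0` uniformly for `u` in the support of the impulse. -/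
def impulseSector : Set (ℝ × ℝ) := {q | q.2 ∈ Ioo (-q.1) q.1}

theorem eventually_nhdsWithin_impulseSector {P : ℝ × ℝ → Prop} :
    (∀ᶠ q in 𝓝[impulseSector] 0, P q) ↔ ∀ᶠ ε in 𝓝[>] 0, ∀ u ∈ Ioo (-ε) ε, P (ε, u) := by
  rw [Metric.nhdsWithin_basis_ball.eventually_iff, (nhdsGT_basis (0 : ℝ)).eventually_iff]
  refine exists_congr fun δ => and_congr_right fun _ => ⟨fun h ε hε u hu => ?_, fun h q hq => ?_⟩
  · refine h ⟨?_, hu⟩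
    rw [mem_ball_zero_iff, Prod.norm_mk, max_lt_iff]
    exact ⟨abs_lt.2 ⟨by linarith [hε.1, hε.2], hε.2⟩,
      abs_lt.2 ⟨by linarith [hu.1, hε.2], hu.2.trans hε.2⟩⟩
  · have hqδ : |q.1| < δ := (norm_fst_le q).trans_lt (mem_ball_zero_iff.1 hq.1)
    have hpos : 0 < q.1 := by linarith [hq.2.1, hq.2.2]
    exact h ⟨hpos, (abs_lt.1 hqδ).2⟩ q.2 hq.2

namespace IsGenDeltaNet

variable {E : Type*} [NormedAddCommGroup E] [NormedSpace ℝ E] {ρ : ℝ → ℝ → ℝ} {w : ℝ → ℝ → E}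
  {c : E}

theorem exists_eventually_isImpulse (hρ : IsGenDeltaNet ρ) :
    ∃ C, ∀ᶠ ε in 𝓝[>] 0, IsImpulse (ρ ε) ε C := by
  obtain ⟨hsmooth, hsupp, -, C, hC⟩ := hρ
  refine ⟨C, ?_⟩
  filter_upwards [Ioo_mem_nhdsGT one_pos] with ε hε
  have hcont : Continuous (ρ ε) := (hsmooth ε hε).continuous
  have hsupp' := interior_maximal (hsupp ε hε) hcont.isOpen_support
  exact ⟨hcont, by rwa [interior_Icc] at hsupp', hC ε hε, hε.2.le⟩

theorem eventually_differentiable (hρ : IsGenDeltaNet ρ) :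
    ∀ᶠ ε in 𝓝[>] 0, Differentiable ℝ (ρ ε) := by
  filter_upwards [Ioo_mem_nhdsGT one_pos] with ε hε
  exact (hρ.1 ε hε).differentiable (by simp)

theorem tendsto_integral (hρ : IsGenDeltaNet ρ) :
    Tendsto (fun ε => ∫ s, ρ ε s) (𝓝[>] 0) (𝓝 1) := by
  simpa only [nhdsWithin_Ioo_eq_nhdsGT one_pos] using hρ.2.2.1

theorem exists_eventually_norm_integral_smul_le (hρ : IsGenDeltaNet ρ)
    (hw : Tendsto (Function.uncurry w) (𝓝[impulseSector] 0) (𝓝 c)) :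
    ∃ B, ∀ᶠ ε in 𝓝[>] 0, ∀ u, ‖∫ s in (-1)..u, ρ ε s • w ε s‖ ≤ B := by
  obtain ⟨C, hC⟩ := hρ.exists_eventually_isImpulse
  have hbound := hw.norm.eventually (ge_mem_nhds (lt_add_one ‖c‖))
  refine ⟨(‖c‖ + 1) * C, ?_⟩
  filter_upwards [hC, eventually_nhdsWithin_impulseSector.1 hbound] with ε hr hwε u
  exact hr.norm_integral_smul_le (by positivity) fun s hs _ => hwε s hs

theorem tendsto_integral_smul_zero (hρ : IsGenDeltaNet ρ)
    (hw : Tendsto (Function.uncurry w) (𝓝[impulseSector] 0) (𝓝 0)) (u : ℝ) :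
    Tendsto (fun ε => ∫ s in (-1)..u, ρ ε s • w ε s) (𝓝[>] 0) (𝓝 0) := by
  obtain ⟨C, hC⟩ := hρ.exists_eventually_isImpulse
  refine Metric.tendsto_nhds.2 fun δ hδ => ?_
  obtain ⟨η, hη, hηδ⟩ : ∃ η > 0, η * C < δ := by
    have hlim : Tendsto (fun η => η * C) (𝓝[>] 0) (𝓝 0) :=
      tendsto_nhdsWithin_of_tendsto_nhds (Continuous.tendsto' (by fun_prop) _ _ (zero_mul C))
    exact (eventually_mem_nhdsWithin.and (hlim.eventually_lt_const hδ)).exists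
  have hsmall := (tendsto_zero_iff_norm_tendsto_zero.1 hw).eventually (ge_mem_nhds hη)
  filter_upwards [hC, eventually_nhdsWithin_impulseSector.1 hsmall] with ε hr hwε
  rw [dist_zero_right]
  exact (hr.norm_integral_smul_le hη.le fun s hs _ => hwε s hs).trans_lt hηδ

theorem tendsto_integral_smul [CompleteSpace E] (hρ : IsGenDeltaNet ρ)
    (hwc : ∀ᶠ ε in 𝓝[>] 0, Continuous (w ε))
    (hw : Tendsto (Function.uncurry w) (𝓝[impulseSector] 0) (𝓝 c)) {u : ℝ} (hu : u ≠ 0) :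
    Tendsto (fun ε => ∫ s in (-1)..u, ρ ε s • w ε s) (𝓝[>] 0)
      (𝓝 ((Ioi (0 : ℝ)).indicator (fun _ => c) u)) := by
  obtain ⟨C, hC⟩ := hρ.exists_eventually_isImpulse
  rcases hu.lt_or_gt with hu | hu
  · rw [indicator_of_notMem (notMem_Ioi.2 hu.le)]
    refine tendsto_const_nhds.congr' ?_
    filter_upwards [hC, Ioo_mem_nhdsGT (neg_pos.2 hu)] with ε hr hε
    exact (hr.integral_smul_eq_zero _ (le_neg.1 hε.2.le)).symm
  · rw [indicator_of_mem (mem_Ioi.2 hu)]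
    have herror := hρ.tendsto_integral_smul_zero (w := fun ε s => w ε s - c)
      (tendsto_sub_nhds_zero_iff.2 hw) u
    have hsum := herror.add (hρ.tendsto_integral.smul_const c)
    rw [zero_add, one_smul] at hsum
    refine hsum.congr' ?_
    filter_upwards [hC, hwc, Ioo_mem_nhdsGT hu] with ε hr hcont hε
    have hρc := hr.continuous
    rw [← hr.integral_eq_integral hε.2.le, ← intervalIntegral.integral_smul_const,
      ← intervalIntegral.integral_add]
    · simp only [smul_sub, sub_add_cancel]
    · exact (hρc.smul (hcont.sub continuous_const)).intervalIntegrable _ _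
    · exact (hρc.smul continuous_const).intervalIntegrable _ _

end IsGenDeltaNet

/-- A solution of the impulsively forced system `ÿ = r F(y)` with data `y₀`, `y₁` prescribed at
time `-1`, for a force field `F` on an arbitrary normed space; `IsXSol` is the case
`F = ½ ∇f` on `ℝ²`. -/
structure IsImpulsiveMotion {E : Type*} [NormedAddCommGroup E] [NormedSpace ℝ E] (r : ℝ → ℝ)
    (F : E → E) (y₀ y₁ : E) (y : ℝ → E) : Prop where
  contDiff : ContDiff ℝ 2 y
  deriv_deriv (u : ℝ) : deriv (deriv y) u = r u • F (y u)
  apply_neg_one : y (-1) = y₀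
  deriv_neg_one : deriv y (-1) = y₁

namespace IsImpulsiveMotion

variable {E : Type*} [NormedAddCommGroup E] [NormedSpace ℝ E] {F : E → E} {y₀ y₁ : E}

section SingleImpulse

variable {r : ℝ → ℝ} {ε C M : ℝ} {y : ℝ → E}

theorem contDiff_deriv (hy : IsImpulsiveMotion r F y₀ y₁ y) : ContDiff ℝ 1 (deriv y) :=
  (contDiff_succ_iff_deriv.1 hy.contDiff).2.2

theorem differentiable (hy : IsImpulsiveMotion r F y₀ y₁ y) : Differentiable ℝ y :=
  hy.contDiff.differentiable two_ne_zero

variable [CompleteSpace E]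

theorem deriv_eq (hy : IsImpulsiveMotion r F y₀ y₁ y) (u : ℝ) :
    deriv y u = y₁ + ∫ s in (-1)..u, r s • F (y s) := by
  rw [eq_add_intervalIntegral_deriv hy.contDiff_deriv (-1) u, hy.deriv_neg_one]
  simp only [hy.deriv_deriv]

theorem apply_neg_width (hy : IsImpulsiveMotion r F y₀ y₁ y) (hr : IsImpulse r ε C) :
    y (-ε) = y₀ + (1 - ε) • y₁ := by
  have hfree : EqOn (deriv y) (fun _ => y₁) (uIcc (-1) (-ε)) := fun s hs => by
    rw [hy.deriv_eq,
      hr.integral_smul_eq_zero _ (hs.2.trans (max_le (neg_le_neg hr.le_one) le_rfl)), add_zero]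
  rw [eq_add_intervalIntegral_deriv (hy.contDiff.of_le one_le_two) (-1) (-ε), hy.apply_neg_one,
    intervalIntegral.integral_congr hfree, intervalIntegral.integral_const, neg_sub_neg]

theorem norm_deriv_le (hy : IsImpulsiveMotion r F y₀ y₁ y) (hr : IsImpulse r ε C) (hM : 0 ≤ M)
    {u : ℝ} (hF : ∀ s ∈ Ioo (-ε) ε, s ≤ u → ‖F (y s)‖ ≤ M) : ‖deriv y u‖ ≤ ‖y₁‖ + M * C := by
  rw [hy.deriv_eq]
  exact (norm_add_le _ _).trans (add_le_add_right (hr.norm_integral_smul_le hM hF) _)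

theorem norm_sub_le_of_forall_Ico (hy : IsImpulsiveMotion r F y₀ y₁ y) (hr : IsImpulse r ε C)
    (hM : 0 ≤ M) {t : ℝ} (ht : t ∈ Icc (-ε) ε) (hF : ∀ s ∈ Ico (-ε) t, ‖F (y s)‖ ≤ M) :
    ‖y t - (y₀ + y₁)‖ ≤ 3 * ε * (‖y₁‖ + M * C) := by
  have hC := hr.mass_nonneg
  have hε : 0 ≤ ε := by linarith [ht.1, ht.2]
  have hstart : ‖y (-ε) - (y₀ + y₁)‖ ≤ ε * (‖y₁‖ + M * C) := by
    rw [hy.apply_neg_width hr, show y₀ + (1 - ε) • y₁ - (y₀ + y₁) = -(ε • y₁) by module, norm_neg,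
      norm_smul, Real.norm_of_nonneg hε]
    exact mul_le_mul_of_nonneg_left (le_add_of_nonneg_right (by positivity)) hε
  have hmove : ‖y t - y (-ε)‖ ≤ (‖y₁‖ + M * C) * (t - -ε) :=
    norm_image_sub_le_of_norm_deriv_le_segment'
      (fun u _ => (hy.differentiable u).hasDerivAt.hasDerivWithinAt)
      (fun u hu => hy.norm_deriv_le hr hM fun s hs hsu => hF s ⟨hs.1.le, hsu.trans_lt hu.2⟩)
      t ⟨ht.1, le_rfl⟩
  have hduration : (‖y₁‖ + M * C) * (t - -ε) ≤ (‖y₁‖ + M * C) * (2 * ε) :=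
    mul_le_mul_of_nonneg_left (by linarith [ht.2]) (by positivity)
  linarith [norm_sub_le_norm_sub_add_norm_sub (y t) (y (-ε)) (y₀ + y₁)]

theorem norm_sub_le (hy : IsImpulsiveMotion r F y₀ y₁ y) (hr : IsImpulse r ε C) (hM : 0 ≤ M)
    {R : ℝ} (hF : ∀ p ∈ Metric.ball (y₀ + y₁) R, ‖F p‖ ≤ M)
    (hR : 3 * ε * (‖y₁‖ + M * C) < R) :
    ∀ t ∈ Icc (-ε) ε, ‖y t - (y₀ + y₁)‖ ≤ 3 * ε * (‖y₁‖ + M * C) := by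
  have hlocal : ∀ t ∈ Icc (-ε) ε, (∀ s ∈ Ico (-ε) t, ‖y s - (y₀ + y₁)‖ < R) →
      ‖y t - (y₀ + y₁)‖ ≤ 3 * ε * (‖y₁‖ + M * C) := fun t ht hball =>
    hy.norm_sub_le_of_forall_Ico hr hM ht fun s hs => hF _ (mem_ball_iff_norm.2 (hball s hs))
  have hstay : ∀ t ∈ Icc (-ε) ε, ‖y t - (y₀ + y₁)‖ < R :=
    lt_of_continuousOn_Icc_of_forall_Ico
      (hy.differentiable.continuous.sub continuous_const).norm.continuousOn
      fun t ht hball => (hlocal t ht hball).trans_lt hR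
  exact fun t ht => hlocal t ht fun s hs => hstay s ⟨hs.1, hs.2.le.trans ht.2⟩

end SingleImpulse

variable [CompleteSpace E] {ρ : ℝ → ℝ → ℝ} {y : ℝ → ℝ → E}

theorem tendsto_impulseSector (hρ : IsGenDeltaNet ρ) (hF : ContinuousAt F (y₀ + y₁))
    (hy : ∀ᶠ ε in 𝓝[>] 0, IsImpulsiveMotion (ρ ε) F y₀ y₁ (y ε)) :
    Tendsto (Function.uncurry y) (𝓝[impulseSector] 0) (𝓝 (y₀ + y₁)) := by
  obtain ⟨C, hC⟩ := hρ.exists_eventually_isImpulse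
  obtain ⟨R, hR, hFR⟩ :=
    Metric.eventually_nhds_iff_ball.1 (hF.norm.eventually (ge_mem_nhds (lt_add_one _)))
  set K := 3 * (‖y₁‖ + (‖F (y₀ + y₁)‖ + 1) * C)
  have hlim : Tendsto (fun ε : ℝ => ε * K) (𝓝[>] 0) (𝓝 0) :=
    tendsto_nhdsWithin_of_tendsto_nhds (Continuous.tendsto' (by fun_prop) _ _ (zero_mul K))
  refine Metric.tendsto_nhds.2 fun δ hδ => eventually_nhdsWithin_impulseSector.2 ?_
  filter_upwards [hC, hy, hlim.eventually_lt_const hR, hlim.eventually_lt_const hδ]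
    with ε hr hyε hεR hεδ u hu
  have hK : 3 * ε * (‖y₁‖ + (‖F (y₀ + y₁)‖ + 1) * C) = ε * K := by ring
  rw [Function.uncurry_apply_pair, dist_eq_norm]
  exact (hyε.norm_sub_le hr (by positivity) hFR (hK.trans_lt hεR) u
    (Ioo_subset_Icc_self hu)).trans_lt (hK.trans_lt hεδ)

theorem exists_eventually_norm_deriv_le (hρ : IsGenDeltaNet ρ) (hF : ContinuousAt F (y₀ + y₁))
    (hy : ∀ᶠ ε in 𝓝[>] 0, IsImpulsiveMotion (ρ ε) F y₀ y₁ (y ε)) :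
    ∃ B, ∀ᶠ ε in 𝓝[>] 0, ∀ u, ‖deriv (y ε) u‖ ≤ B := by
  obtain ⟨B, hB⟩ := hρ.exists_eventually_norm_integral_smul_le (w := fun ε s => F (y ε s))
    (hF.tendsto.comp (tendsto_impulseSector hρ hF hy))
  refine ⟨‖y₁‖ + B, ?_⟩
  filter_upwards [hy, hB] with ε hyε hBε u
  rw [hyε.deriv_eq]
  exact (norm_add_le _ _).trans (add_le_add_right (hBε u) _)

theorem tendsto_deriv (hρ : IsGenDeltaNet ρ) (hF : Continuous F)
    (hy : ∀ᶠ ε in 𝓝[>] 0, IsImpulsiveMotion (ρ ε) F y₀ y₁ (y ε)) {u : ℝ} (hu : u ≠ 0) :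
    Tendsto (fun ε => deriv (y ε) u) (𝓝[>] 0)
      (𝓝 (y₁ + (Ioi (0 : ℝ)).indicator (fun _ => F (y₀ + y₁)) u)) := by
  have hforce := hρ.tendsto_integral_smul (w := fun ε s => F (y ε s))
    (hy.mono fun ε hyε => hF.comp hyε.differentiable.continuous)
    ((hF.tendsto _).comp (tendsto_impulseSector hρ hF.continuousAt hy)) hu
  exact (hforce.const_add y₁).congr' (hy.mono fun ε hyε => (hyε.deriv_eq u).symm)

end IsImpulsiveMotion

section Plane

theorem fderiv_apply_eq_dot2_grad2 (f : ℝ × ℝ → ℝ) (p w : ℝ × ℝ) :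
    fderiv ℝ f p w = dot2 (grad2 f p) w := by
  have hw : w = w.1 • ((1 : ℝ), (0 : ℝ)) + w.2 • ((0 : ℝ), (1 : ℝ)) := by ext <;> simp
  conv_lhs => rw [hw]
  simp only [map_add, map_smul, dot2, grad2, smul_eq_mul]
  ring

theorem continuous_grad2 {f : ℝ × ℝ → ℝ} (hf : ContDiff ℝ 1 f) : Continuous (grad2 f) := by
  have h : Continuous (fderiv ℝ f) := hf.continuous_fderiv one_ne_zero
  exact (h.clm_apply continuous_const).prodMk (h.clm_apply continuous_const)

theorem continuous_dot2_self : Continuous fun p : ℝ × ℝ => dot2 p p := by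
  unfold dot2
  fun_prop

theorem dot2_add_half_smul_self (a g : ℝ × ℝ) :
    dot2 (a + (2⁻¹ : ℝ) • g) (a + (2⁻¹ : ℝ) • g)
      = dot2 a a + dot2 g (a + (4⁻¹ : ℝ) • g) := by
  simp only [dot2, Prod.fst_add, Prod.snd_add, Prod.smul_fst, Prod.smul_snd, smul_eq_mul]
  ring

theorem hasDerivAt_dot2_self {z : ℝ → ℝ × ℝ} {z' : ℝ × ℝ} {t : ℝ} (hz : HasDerivAt z z' t) :
    HasDerivAt (fun s => dot2 (z s) (z s)) (2 * dot2 z' (z t)) t := by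
  have h₁ : HasDerivAt (fun s => (z s).1) z'.1 t :=
    hz.hasFDerivAt.fst.hasDerivAt.congr_deriv (by simp)
  have h₂ : HasDerivAt (fun s => (z s).2) z'.2 t :=
    hz.hasFDerivAt.snd.hasDerivAt.congr_deriv (by simp)
  refine ((h₁.mul h₁).add (h₂.mul h₂)).congr_deriv ?_
  rw [dot2]
  ring

theorem hasDerivAt_comp_dot2_grad2 {f : ℝ × ℝ → ℝ} {z : ℝ → ℝ × ℝ} {z' : ℝ × ℝ} {t : ℝ}
    (hf : DifferentiableAt ℝ f (z t)) (hz : HasDerivAt z z' t) :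
    HasDerivAt (fun s => f (z s)) (dot2 (grad2 f (z t)) z') t := by
  rw [← fderiv_apply_eq_dot2_grad2]
  exact hf.hasFDerivAt.comp_hasDerivAt t hz

end Plane

theorem IsXSol.isImpulsiveMotion {f : ℝ × ℝ → ℝ} {ρ : ℝ → ℝ → ℝ} {x₀ xdot0 : ℝ × ℝ} {ε : ℝ}
    {x : ℝ → ℝ × ℝ} (hx : IsXSol f ρ x₀ xdot0 ε x) :
    IsImpulsiveMotion (ρ ε) ((2⁻¹ : ℝ) • grad2 f) x₀ xdot0 x where
  contDiff := contDiff_infty.1 hx.1 2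
  deriv_deriv u := by rw [hx.2.1 u, Pi.smul_apply, smul_smul, div_eq_mul_inv]
  apply_neg_one := hx.2.2.1
  deriv_neg_one := hx.2.2.2

namespace IsVSol

variable {f : ℝ × ℝ → ℝ} {ρ : ℝ → ℝ → ℝ} {x₀ xdot0 : ℝ × ℝ} {v₀ vdot0 ε : ℝ} {x : ℝ → ℝ × ℝ}
  {v : ℝ → ℝ}

theorem hasDerivAt_first_integral (hv : IsVSol f ρ x v₀ vdot0 ε v)
    (hx : IsXSol f ρ x₀ xdot0 ε x) (hf : Differentiable ℝ f) (hρ : Differentiable ℝ (ρ ε))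
    (t : ℝ) :
    HasDerivAt (fun s => deriv v s - (ρ ε s * f (x s) + dot2 (deriv x s) (deriv x s))) 0 t := by
  have hvel : HasDerivAt x (deriv x t) t := (hx.1.differentiable (by simp) t).hasDerivAt
  have hacc : HasDerivAt (deriv x) ((ρ ε t / 2) • grad2 f (x t)) t :=
    hx.2.1 t ▸ (hx.isImpulsiveMotion.contDiff_deriv.differentiable one_ne_zero t).hasDerivAt
  have hvacc : HasDerivAt (deriv v) (f (x t) * deriv (ρ ε) t
      + 2 * dot2 (grad2 f (x t)) (deriv x t) * ρ ε t) t :=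
    hv.2.1 t ▸ ((contDiff_infty_iff_deriv.1 hv.1).2.differentiable (by simp) t).hasDerivAt
  refine (hvacc.sub (((hρ t).hasDerivAt.mul (hasDerivAt_comp_dot2_grad2 (hf _) hvel)).add
    (hasDerivAt_dot2_self hacc))).congr_deriv ?_
  simp only [dot2, Prod.smul_fst, Prod.smul_snd, smul_eq_mul]
  ring

theorem deriv_eq (hv : IsVSol f ρ x v₀ vdot0 ε v) (hx : IsXSol f ρ x₀ xdot0 ε x)
    (hf : Differentiable ℝ f) (hρ : Differentiable ℝ (ρ ε)) (hρ₀ : ρ ε (-1) = 0) (u : ℝ) :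
    deriv v u = vdot0 + (ρ ε u • f (x u)
      + (dot2 (deriv x u) (deriv x u) - dot2 xdot0 xdot0)) := by
  have hderiv := hv.hasDerivAt_first_integral hx hf hρ
  have hconst := is_const_of_deriv_eq_zero (fun t => (hderiv t).differentiableAt)
    (fun t => (hderiv t).deriv) u (-1)
  rw [hρ₀, hv.2.2.2, hx.2.2.2] at hconst
  rw [smul_eq_mul]
  linarith

theorem apply_eq (hv : IsVSol f ρ x v₀ vdot0 ε v) (hx : IsXSol f ρ x₀ xdot0 ε x)
    (hf : Differentiable ℝ f) (hρ : Differentiable ℝ (ρ ε)) (hρ₀ : ρ ε (-1) = 0) (u : ℝ) :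
    v u = v₀ + vdot0 * (1 + u) + (∫ s in (-1)..u, ρ ε s • f (x s))
      + ∫ s in (-1)..u, (dot2 (deriv x s) (deriv x s) - dot2 xdot0 xdot0) := by
  have hjump : Continuous fun s => ρ ε s • f (x s) :=
    hρ.continuous.smul (hf.continuous.comp hx.1.continuous)
  have hkink : Continuous fun s => dot2 (deriv x s) (deriv x s) - dot2 xdot0 xdot0 :=
    (continuous_dot2_self.comp hx.isImpulsiveMotion.contDiff_deriv.continuous).sub continuous_const
  rw [eq_add_intervalIntegral_deriv (hv.1.of_le (by simp)) (-1) u, hv.2.2.1,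
    intervalIntegral.integral_congr fun s _ => hv.deriv_eq hx hf hρ hρ₀ s,
    intervalIntegral.integral_add intervalIntegrable_const
      ((hjump.intervalIntegrable _ _).add (hkink.intervalIntegrable _ _)),
    intervalIntegral.integral_add (hjump.intervalIntegrable _ _) (hkink.intervalIntegrable _ _),
    intervalIntegral.integral_const, smul_eq_mul]
  ring

end IsVSol

/-- The limit profile of the `v`-component: the free motion for `u ≤ 0`, to which a jump and a
kink are added for `u > 0`. -/
noncomputable def vLimit (f : ℝ × ℝ → ℝ) (x₀ xdot0 : ℝ × ℝ) (v₀ vdot0 u : ℝ) : ℝ :=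
  v₀ + vdot0 * (1 + u) + (Ioi (0 : ℝ)).indicator (fun _ => f (x₀ + xdot0)) u
    + (Ioi (0 : ℝ)).indicator (fun s => s • dot2 (grad2 f (x₀ + xdot0))
        (xdot0 + (4⁻¹ : ℝ) • grad2 f (x₀ + xdot0))) u

theorem integral_vLimit_mul (f : ℝ × ℝ → ℝ) (x₀ xdot0 : ℝ × ℝ) (v₀ vdot0 : ℝ) {φ : ℝ → ℝ}
    (hφ : Integrable φ) (hφ₁ : Integrable fun u => u * φ u) :
    ∫ u, vLimit f x₀ xdot0 v₀ vdot0 u * φ u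
      = (∫ u, (v₀ + vdot0 * (1 + u)) * φ u) + f (x₀ + xdot0) * (∫ u in Ioi (0 : ℝ), φ u)
        + dot2 (grad2 f (x₀ + xdot0)) (xdot0 + (4⁻¹ : ℝ) • grad2 f (x₀ + xdot0))
            * (∫ u in Ioi (0 : ℝ), u * φ u) := by
  have hfree : Integrable fun u => (v₀ + vdot0 * (1 + u)) * φ u :=
    ((hφ.const_mul (v₀ + vdot0)).add (hφ₁.const_mul vdot0)).congr <|
      Eventually.of_forall fun u => by simp only [Pi.add_apply]; ring
  rw [← integral_const_mul, ← integral_const_mul, ← integral_indicator measurableSet_Ioi,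
    ← integral_indicator measurableSet_Ioi,
    ← integral_add hfree ((hφ.const_mul _).indicator measurableSet_Ioi),
    ← integral_add (hfree.fun_add ((hφ.const_mul _).indicator measurableSet_Ioi))
      ((hφ₁.const_mul _).indicator measurableSet_Ioi)]
  refine integral_congr_ae (Eventually.of_forall fun u => ?_)
  by_cases hu : u ∈ Ioi (0 : ℝ)
  · simp only [vLimit, indicator_of_mem hu, smul_eq_mul]
    ring
  · simp only [vLimit, indicator_of_notMem hu]
    ring

section Limit

variable {f : ℝ × ℝ → ℝ} {ρ : ℝ → ℝ → ℝ} {x₀ xdot0 : ℝ × ℝ} {x : ℝ → ℝ → ℝ × ℝ}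
  {v₀ vdot0 : ℝ} {v : ℝ → ℝ → ℝ}

theorem tendsto_comp_impulseSector (hf : ContDiff ℝ 1 f) (hρ : IsGenDeltaNet ρ)
    (hx : ∀ᶠ ε in 𝓝[>] 0, IsXSol f ρ x₀ xdot0 ε (x ε)) :
    Tendsto (Function.uncurry fun ε s => f (x ε s)) (𝓝[impulseSector] 0)
      (𝓝 (f (x₀ + xdot0))) :=
  (hf.continuous.tendsto _).comp <| IsImpulsiveMotion.tendsto_impulseSector hρ
    ((continuous_grad2 hf).const_smul _).continuousAt (hx.mono fun _ h => h.isImpulsiveMotion)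

theorem exists_eventually_norm_dot2_deriv_sub_le (hf : ContDiff ℝ 1 f) (hρ : IsGenDeltaNet ρ)
    (hx : ∀ᶠ ε in 𝓝[>] 0, IsXSol f ρ x₀ xdot0 ε (x ε)) :
    ∃ D, ∀ᶠ ε in 𝓝[>] 0, ∀ s,
      ‖dot2 (deriv (x ε) s) (deriv (x ε) s) - dot2 xdot0 xdot0‖ ≤ D := by
  obtain ⟨B, hB⟩ := IsImpulsiveMotion.exists_eventually_norm_deriv_le hρ
    ((continuous_grad2 hf).const_smul _).continuousAt (hx.mono fun _ h => h.isImpulsiveMotion)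
  obtain ⟨D, hD⟩ := (isCompact_closedBall (0 : ℝ × ℝ) B).exists_bound_of_continuousOn
    (continuous_dot2_self.sub (continuous_const (y := dot2 xdot0 xdot0))).continuousOn
  exact ⟨D, hB.mono fun ε hε s => hD _ (mem_closedBall_zero_iff.2 (hε s))⟩

theorem tendsto_dot2_deriv_sub (hf : ContDiff ℝ 1 f) (hρ : IsGenDeltaNet ρ)
    (hx : ∀ᶠ ε in 𝓝[>] 0, IsXSol f ρ x₀ xdot0 ε (x ε)) {s : ℝ} (hs : s ≠ 0) :
    Tendsto (fun ε => dot2 (deriv (x ε) s) (deriv (x ε) s) - dot2 xdot0 xdot0) (𝓝[>] 0)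
      (𝓝 ((Ioi (0 : ℝ)).indicator (fun _ => dot2 (grad2 f (x₀ + xdot0))
        (xdot0 + (4⁻¹ : ℝ) • grad2 f (x₀ + xdot0))) s)) := by
  have hvel := IsImpulsiveMotion.tendsto_deriv hρ ((continuous_grad2 hf).const_smul _)
    (hx.mono fun _ h => h.isImpulsiveMotion) hs
  have hlim := ((continuous_dot2_self.tendsto _).comp hvel).sub_const (dot2 xdot0 xdot0)
  by_cases hpos : s ∈ Ioi (0 : ℝ)
  · rw [indicator_of_mem hpos, Pi.smul_apply, dot2_add_half_smul_self, add_sub_cancel_left] at hlim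
    rwa [indicator_of_mem hpos]
  · rw [indicator_of_notMem hpos, add_zero, sub_self] at hlim
    rwa [indicator_of_notMem hpos]

theorem tendsto_integral_dot2_deriv_sub (hf : ContDiff ℝ 1 f) (hρ : IsGenDeltaNet ρ)
    (hx : ∀ᶠ ε in 𝓝[>] 0, IsXSol f ρ x₀ xdot0 ε (x ε)) (u : ℝ) :
    Tendsto (fun ε => ∫ s in (-1)..u, (dot2 (deriv (x ε) s) (deriv (x ε) s) - dot2 xdot0 xdot0))
      (𝓝[>] 0) (𝓝 ((Ioi (0 : ℝ)).indicator (fun s => s • dot2 (grad2 f (x₀ + xdot0))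
        (xdot0 + (4⁻¹ : ℝ) • grad2 f (x₀ + xdot0))) u)) := by
  obtain ⟨D, hD⟩ := exists_eventually_norm_dot2_deriv_sub_le hf hρ hx
  rw [← intervalIntegral_indicator_Ioi_const (neg_one_lt_zero.le)]
  refine intervalIntegral.tendsto_integral_filter_of_dominated_convergence (fun _ => D)
    ?_ ?_ intervalIntegrable_const ?_
  · filter_upwards [hx] with ε hxε
    exact ((continuous_dot2_self.comp hxε.isImpulsiveMotion.contDiff_deriv.continuous).sub
      continuous_const).aestronglyMeasurable
  · exact hD.mono fun ε hε => Eventually.of_forall fun s _ => hε s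
  · filter_upwards [Measure.ae_ne volume (0 : ℝ)] with s hs _
    exact tendsto_dot2_deriv_sub hf hρ hx hs

theorem eventually_v_eq (hf : Differentiable ℝ f) (hρ : IsGenDeltaNet ρ)
    (hx : ∀ᶠ ε in 𝓝[>] 0, IsXSol f ρ x₀ xdot0 ε (x ε))
    (hv : ∀ᶠ ε in 𝓝[>] 0, IsVSol f ρ (x ε) v₀ vdot0 ε (v ε)) :
    ∀ᶠ ε in 𝓝[>] 0, ∀ u, v ε u = v₀ + vdot0 * (1 + u) + (∫ s in (-1)..u, ρ ε s • f (x ε s))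
      + ∫ s in (-1)..u, (dot2 (deriv (x ε) s) (deriv (x ε) s) - dot2 xdot0 xdot0) := by
  obtain ⟨C, hC⟩ := hρ.exists_eventually_isImpulse
  filter_upwards [hC, hρ.eventually_differentiable, hx, hv] with ε hr hρd hxε hvε
  exact hvε.apply_eq hxε hf hρd (hr.eq_zero_of_le_neg (neg_le_neg hr.le_one))

theorem tendsto_v (hf : ContDiff ℝ 1 f) (hρ : IsGenDeltaNet ρ)
    (hx : ∀ᶠ ε in 𝓝[>] 0, IsXSol f ρ x₀ xdot0 ε (x ε))
    (hv : ∀ᶠ ε in 𝓝[>] 0, IsVSol f ρ (x ε) v₀ vdot0 ε (v ε)) {u : ℝ} (hu : u ≠ 0) :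
    Tendsto (fun ε => v ε u) (𝓝[>] 0) (𝓝 (vLimit f x₀ xdot0 v₀ vdot0 u)) := by
  have hjump := hρ.tendsto_integral_smul
    (hx.mono fun ε hxε => hf.continuous.comp hxε.1.continuous)
    (tendsto_comp_impulseSector hf hρ hx) hu
  have hkink := tendsto_integral_dot2_deriv_sub hf hρ hx u
  refine ((hjump.const_add (v₀ + vdot0 * (1 + u))).add hkink).congr' ?_
  exact (eventually_v_eq (hf.differentiable one_ne_zero) hρ hx hv).mono fun ε h => (h u).symm

theorem exists_eventually_abs_v_le (hf : ContDiff ℝ 1 f) (hρ : IsGenDeltaNet ρ)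
    (hx : ∀ᶠ ε in 𝓝[>] 0, IsXSol f ρ x₀ xdot0 ε (x ε))
    (hv : ∀ᶠ ε in 𝓝[>] 0, IsVSol f ρ (x ε) v₀ vdot0 ε (v ε)) :
    ∃ D, ∀ᶠ ε in 𝓝[>] 0, ∀ u, |v ε u| ≤ D * (1 + |u|) := by
  obtain ⟨B, hB⟩ :=
    hρ.exists_eventually_norm_integral_smul_le (tendsto_comp_impulseSector hf hρ hx)
  obtain ⟨D, hD⟩ := exists_eventually_norm_dot2_deriv_sub_le hf hρ hx
  refine ⟨|v₀| + |vdot0| + B + D, ?_⟩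
  filter_upwards [hB, hD, eventually_v_eq (hf.differentiable one_ne_zero) hρ hx hv]
    with ε hBε hDε hvε u
  have hB₀ : 0 ≤ B := (norm_nonneg _).trans (hBε u)
  have hD₀ : 0 ≤ D := (norm_nonneg _).trans (hDε u)
  have hu : |1 + u| ≤ 1 + |u| := (abs_add_le 1 u).trans_eq (by rw [abs_one])
  have hkink := intervalIntegral.norm_integral_le_of_norm_le_const
    (a := -1) (b := u) fun s _ => hDε s
  rw [sub_neg_eq_add, add_comm u] at hkink
  rw [hvε u]
  calc _ ≤ |v₀| + |vdot0| * |1 + u| + B + D * |1 + u| := by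
        refine (abs_add_le _ _).trans (add_le_add ((abs_add_le _ _).trans
          (add_le_add ((abs_add_le _ _).trans_eq ?_) (hBε u))) hkink)
        rw [abs_mul]
    _ ≤ |v₀| * (1 + |u|) + |vdot0| * (1 + |u|) + B * (1 + |u|) + D * (1 + |u|) := by
        have hone : 1 ≤ 1 + |u| := le_add_of_nonneg_right (abs_nonneg u)
        gcongr
        · exact le_mul_of_one_le_right (abs_nonneg _) hone
        · exact le_mul_of_one_le_right hB₀ hone
    _ = (|v₀| + |vdot0| + B + D) * (1 + |u|) := by ring

theorem v_distributional_limit_general (hf : ContDiff ℝ 1 f) (hρ : IsGenDeltaNet ρ)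
    (hx : ∀ᶠ ε in 𝓝[>] 0, IsXSol f ρ x₀ xdot0 ε (x ε))
    (hv : ∀ᶠ ε in 𝓝[>] 0, IsVSol f ρ (x ε) v₀ vdot0 ε (v ε)) {φ : ℝ → ℝ}
    (hφ : Integrable φ) (hφ₁ : Integrable fun u => u * φ u) :
    Tendsto (fun ε => ∫ u, v ε u * φ u) (𝓝[>] 0)
      (𝓝 ((∫ u, (v₀ + vdot0 * (1 + u)) * φ u)
        + f (x₀ + xdot0) * (∫ u in Ioi (0 : ℝ), φ u)
        + dot2 (grad2 f (x₀ + xdot0)) (xdot0 + (4⁻¹ : ℝ) • grad2 f (x₀ + xdot0))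
            * (∫ u in Ioi (0 : ℝ), u * φ u))) := by
  obtain ⟨D, hD⟩ := exists_eventually_abs_v_le hf hρ hx hv
  rw [← integral_vLimit_mul f x₀ xdot0 v₀ vdot0 hφ hφ₁]
  refine tendsto_integral_filter_of_dominated_convergence
    (fun u => D * (‖φ u‖ + ‖u * φ u‖)) ?_ ?_ ((hφ.norm.add hφ₁.norm).const_mul D) ?_
  · exact hv.mono fun ε hvε => hvε.1.continuous.aestronglyMeasurable.mul hφ.aestronglyMeasurable
  · refine hD.mono fun ε hDε => Eventually.of_forall fun u => ?_
    calc ‖v ε u * φ u‖ ≤ D * (1 + |u|) * ‖φ u‖ := by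
          rw [norm_mul]
          exact mul_le_mul_of_nonneg_right (hDε u) (norm_nonneg _)
      _ = D * (‖φ u‖ + ‖u * φ u‖) := by
          rw [norm_mul, Real.norm_eq_abs u]
          ring
  · filter_upwards [Measure.ae_ne volume (0 : ℝ)] with u hu
    exact (tendsto_v hf hρ hx hv hu).mul_const _

end Limit

/-- The regularized `v`-component of the geodesics converges distributionally to
`v₀ + v̇₀(1+u) + f(x̂)θ(u) + [∇f(x̂)·(ẋ₀ + ¼∇f(x̂))] u₊`, where `x̂ = x₀ + ẋ₀`:
the geodesic suffers a jump of magnitude `f(x̂)` and a kink at the shock. -/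
theorem v_distributional_limit (f : ℝ × ℝ → ℝ) (hf : ContDiff ℝ (⊤ : ℕ∞) f)
    (ρ : ℝ → ℝ → ℝ) (hρ : IsGenDeltaNet ρ) (x₀ xdot0 : ℝ × ℝ)
    (ε₀ : ℝ) (hε₀ : ε₀ ∈ Ioo (0:ℝ) 1) (x : ℝ → ℝ → ℝ × ℝ)
    (hx : ∀ ε ∈ Ioo 0 ε₀, IsXSol f ρ x₀ xdot0 ε (x ε))
    (v₀ vdot0 : ℝ) (v : ℝ → ℝ → ℝ)
    (hv : ∀ ε ∈ Ioo 0 ε₀, IsVSol f ρ (x ε) v₀ vdot0 ε (v ε)) :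
    ∀ φ : ℝ → ℝ, ContDiff ℝ (⊤ : ℕ∞) φ → HasCompactSupport φ →
      Tendsto (fun ε => ∫ u, v ε u * φ u) (nhdsWithin 0 (Ioo 0 ε₀))
        (nhds ((∫ u, (v₀ + vdot0 * (1 + u)) * φ u)
          + f (x₀ + xdot0) * (∫ u in Ioi (0:ℝ), φ u)
          + dot2 (grad2 f (x₀ + xdot0)) (xdot0 + (4⁻¹ : ℝ) • grad2 f (x₀ + xdot0))
              * (∫ u in Ioi (0:ℝ), u * φ u))) := by
  intro φ hφ hφc
  have hsol : Ioo 0 ε₀ ∈ 𝓝[>] (0 : ℝ) := Ioo_mem_nhdsGT hε₀.1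
  rw [nhdsWithin_Ioo_eq_nhdsGT hε₀.1]
  exact v_distributional_limit_general (hf.of_le (by simp)) hρ (eventually_of_mem hsol hx)
    (eventually_of_mem hsol hv) (hφ.continuous.integrable_of_hasCompactSupport hφc)
    ((continuous_id.mul hφ.continuous).integrable_of_hasCompactSupport hφc.mul_left)
end

section
/- Let f : ℝ → ℝ be smooth, (ρ_ε)_{ε∈(0,1)} a generalized delta net, x_ε (ε < ε₀) the solution of ẍ_ε = ½ f'(x_ε) ρ_ε with x_ε(−1) = x₀, ẋ_ε(−1) = 0, and let N_ε = (N^u_ε, N^v_ε, N^x_ε, N^y_ε) be the solution of the regularized Jacobi system with initial conditions N^a_ε(−1) = 0 for all a and (Ṅ^u_ε, Ṅ^v_ε, Ṅ^x_ε, Ṅ^y_ε)(−1) = (a, b, 0, 0). Then N^v_ε converges distributionally to b(1+u) + a[f(x₀)δ(u) + ¼ f'(x₀)² (θ(u) + u₊)]: for every smooth compactly supported φ : ℝ → ℝ, ∫_ℝ N^v_ε(u) φ(u) du → b ∫_ℝ (1+u) φ(u) du + a f(x₀) φ(0) + ¼ a f'(x₀)² ∫_0^∞ (1+u) φ(u)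 du as ε → 0; i.e. the deviation field suffers a kink, a jump and a δ-like pulse in the v-direction at the shock. -/
open MeasureTheory Filter Set

/-- `x` is the (smooth, globally defined) background geodesic of the axisymmetric impulsive
pp-wave restricted to the hypersurface `y = 0`: `ẍ(u) = ½ f'(x(u)) ρ_ε(u)`, with
`x(-1) = x₀`, `ẋ(-1) = 0`. -/
def IsXSol1 (f : ℝ → ℝ) (ρ : ℝ → ℝ → ℝ) (x₀ : ℝ) (ε : ℝ) (x : ℝ → ℝ) : Prop :=
  ContDiff ℝ (⊤ : ℕ∞) x ∧ (∀ u, deriv (deriv x) u = (ρ ε u / 2) * deriv f (x u)) ∧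
  x (-1) = x₀ ∧ deriv x (-1) = 0

/-- The regularized Jacobi (geodesic deviation) system of the axisymmetric impulsive
pp-wave along the background geodesic `x`:
`N̈ᵘ = 0`, `N̈ʸ = 0`,
`N̈ˣ = [Ṅᵘ f'(x) + ½ Nˣ f''(x)] ρ + ½ f'(x) Nᵘ ρ̇`,
`N̈ᵛ = 2 (Nˣ f'(x) ρ)' − Nˣ f'(x) ρ̇ + (Nᵘ f(x) ρ)'' − Nᵘ f''(x) ẋ² ρ − Nᵘ f'(x) ẍ ρ`. -/
def JacobiEqs (f : ℝ → ℝ) (ρε : ℝ → ℝ) (x : ℝ → ℝ) (Nu Nv Nx Ny : ℝ → ℝ) : Prop :=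
  (∀ u, deriv (deriv Nu) u = 0) ∧
  (∀ u, deriv (deriv Ny) u = 0) ∧
  (∀ u, deriv (deriv Nx) u =
    (deriv Nu u * deriv f (x u) + (1 / 2) * Nx u * deriv (deriv f) (x u)) * ρε u
    + (1 / 2) * deriv f (x u) * Nu u * deriv ρε u) ∧
  (∀ u, deriv (deriv Nv) u =
    2 * deriv (fun t => Nx t * deriv f (x t) * ρε t) u
    - Nx u * deriv f (x u) * deriv ρε u
    + deriv (deriv (fun t => Nu t * f (x t) * ρε t)) u
    - Nu u * deriv (deriv f) (x u) * (deriv x u) ^ 2 * ρε u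
    - Nu u * deriv f (x u) * deriv (deriv x) u * ρε u)

/-!
The vector field `(u + 1) γ̇` along the background geodesic `γ` is a Jacobi field, and so is
`(u + 1) ∂_v`. Uniqueness for linear second order equations therefore gives the explicit formula
`Nᵛ = b (1 + u) + a (1 + u) v̇` with `v̇ = f(x) ρ + ẋ²`. A bootstrap argument shows that the
velocities `ẋ_ε` stay bounded, so that `x_ε → x₀` near `u = 0`. Consequently `f(x_ε) ρ_ε` tends to
`f(x₀) δ`, while `ẋ_ε` tends pointwise and boundedly to `½ f'(x₀) θ`.
-/

open Topology

section SecondOrder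

variable {E : Type*} [NormedAddCommGroup E] [NormedSpace ℝ E]

theorem lipschitzWith_prodMk_snd_smul_fst_add {c K : ℝ} (hc : |c| ≤ K) (p : E) :
    LipschitzWith (max 1 K.toNNReal) fun y : E × E => (y.2, c • y.1 + p) := by
  have hK : 0 ≤ K := (abs_nonneg c).trans hc
  refine LipschitzWith.prod_snd.prodMk (LipschitzWith.of_dist_le_mul fun y z => ?_)
  rw [dist_add_right, dist_smul₀, Real.norm_eq_abs, Real.coe_toNNReal K hK]
  gcongr
  exact le_max_left _ _

theorem eq_of_hasDerivAt_smul_add {q : ℝ → ℝ} (hq : Continuous q) {p g g' h h' : ℝ → E}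
    (hg : ∀ t, HasDerivAt g (g' t) t) (hg' : ∀ t, HasDerivAt g' (q t • g t + p t) t)
    (hh : ∀ t, HasDerivAt h (h' t) t) (hh' : ∀ t, HasDerivAt h' (q t • h t + p t) t)
    {t₀ : ℝ} (h₀ : g t₀ = h t₀) (h₀' : g' t₀ = h' t₀) : g = h := by
  funext t
  obtain ⟨R, hR⟩ := exists_gt (max |t| |t₀|)
  obtain ⟨ht, ht₀⟩ := max_lt_iff.1 hR
  obtain ⟨K, hK⟩ := isCompact_Icc.exists_bound_of_continuousOn (s := Icc (-R) R) hq.continuousOn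
  have huniq : EqOn (fun t => (g t, g' t)) (fun t => (h t, h' t)) (Ioo (-R) R) :=
    ODE_solution_unique_of_mem_Ioo (s := fun _ => univ)
      (fun s hs => (lipschitzWith_prodMk_snd_smul_fst_add
        (hK s (Ioo_subset_Icc_self hs)) (p s)).lipschitzOnWith)
      (abs_lt.1 ht₀) (fun s _ => ⟨(hg s).prodMk (hg' s), mem_univ _⟩)
      (fun s _ => ⟨(hh s).prodMk (hh' s), mem_univ _⟩) (Prod.ext h₀ h₀')
  exact congrArg Prod.fst (huniq (abs_lt.1 ht))

end SecondOrder

theorem hasDerivAt_const_mul_sub_const (a t₀ u : ℝ) :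
    HasDerivAt (fun t => a * (t - t₀)) a u := by
  simpa using ((hasDerivAt_id u).sub_const t₀).const_mul a

theorem lt_of_forall_Ico_lt {g : ℝ → ℝ} {c d M : ℝ} (hg : ContinuousOn g (Icc c d))
    (hstep : ∀ u ∈ Icc c d, (∀ t ∈ Ico c u, g t < M) → g u < M) : ∀ u ∈ Icc c d, g u < M := by
  by_contra! hexit
  have hcompact : IsCompact (Icc c d ∩ g ⁻¹' Ici M) :=
    isCompact_Icc.of_isClosed_subset (hg.preimage_isClosed_of_isClosed isClosed_Icc isClosed_Ici)
      inter_subset_left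
  obtain ⟨s, ⟨hs, hMs⟩, hfirst⟩ := hcompact.exists_isLeast hexit
  refine (hstep s hs fun t ht => ?_).not_ge hMs
  by_contra! hMt
  exact ht.2.not_ge (hfirst ⟨⟨ht.1, ht.2.le.trans hs.2⟩, hMt⟩)

/-- A strict delta net along an arbitrary filter `l` of parameters: the supports shrink to `0`, the
integrals tend to `1` and the `L¹` norms are eventually bounded. -/
structure IsDeltaNet {ι : Type*} (l : Filter ι) (ρ : ι → ℝ → ℝ) : Prop where
  integrable : ∀ᶠ i in l, Integrable (ρ i)
  tendsto_support : Tendsto (fun i => Function.support (ρ i)) l (𝓝 0).smallSets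
  tendsto_integral : Tendsto (fun i => ∫ u, ρ i u) l (𝓝 1)
  integral_abs_le : ∃ C, ∀ᶠ i in l, ∫ u, |ρ i u| ≤ C

theorem IsGenDeltaNet.isDeltaNet {ρ : ℝ → ℝ → ℝ} (hρ : IsGenDeltaNet ρ) {s : Set ℝ}
    (hs : s ⊆ Ioo 0 1) : IsDeltaNet (𝓝[s] 0) ρ := by
  obtain ⟨hsmooth, hsupp, hone, C, hC⟩ := hρ
  have hmem : ∀ᶠ ε in 𝓝[s] (0 : ℝ), ε ∈ Ioo (0 : ℝ) 1 :=
    eventually_mem_nhdsWithin.mono fun _ hε => hs hε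
  refine ⟨?_, ?_, hone.mono_left (nhdsWithin_mono 0 hs), C, hmem.mono hC⟩
  · filter_upwards [hmem] with ε hε
    exact (hsmooth ε hε).continuous.integrable_of_hasCompactSupport
      (.of_support_subset_isCompact isCompact_Icc (hsupp ε hε))
  · have hIcc : Tendsto (fun ε : ℝ => Icc (-ε) ε) (𝓝[s] 0) (𝓝 0).smallSets := by
      have hid : Tendsto (fun ε : ℝ => ε) (𝓝[s] 0) (𝓝 0) := nhdsWithin_le_nhds
      simpa using (show Tendsto (fun ε : ℝ => -ε) (𝓝[s] 0) (𝓝 0) by simpa using hid.neg).Icc hid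
    refine tendsto_smallSets_iff.2 fun t ht => ?_
    filter_upwards [hmem, tendsto_smallSets_iff.1 hIcc t ht] with ε hε hεt
    exact (hsupp ε hε).trans hεt

namespace IsDeltaNet

variable {ι E : Type*} {l : Filter ι} {ρ : ι → ℝ → ℝ} [NormedAddCommGroup E] {g : ι → ℝ → E}
  {L : E}

theorem eventually_support_subset (hρ : IsDeltaNet l ρ) {s : Set ℝ} (hs : s ∈ 𝓝 0) :
    ∀ᶠ i in l, Function.support (ρ i) ⊆ s :=
  tendsto_smallSets_iff.1 hρ.tendsto_support s hs

theorem eventually_norm_sub_lt (hρ : IsDeltaNet l ρ)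
    (hg : Tendsto (fun p : ι × ℝ => g p.1 p.2) (l ×ˢ 𝓝 0) (𝓝 L)) {η : ℝ} (hη : 0 < η) :
    ∀ᶠ i in l, ∀ u ∈ Function.support (ρ i), ‖g i u - L‖ < η := by
  obtain ⟨P, hP, Q, hQ, hPQ⟩ := eventually_prod_iff.1 (hg.eventually (Metric.ball_mem_nhds L hη))
  filter_upwards [hP, hρ.eventually_support_subset hQ] with i hi hsupp u hu
  simpa [dist_eq_norm] using hPQ hi (hsupp hu)

variable [NormedSpace ℝ E]

theorem eventually_integrable_smul (hρ : IsDeltaNet l ρ)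
    (hgm : ∀ᶠ i in l, AEStronglyMeasurable (g i))
    (hg : Tendsto (fun p : ι × ℝ => g p.1 p.2) (l ×ˢ 𝓝 0) (𝓝 L)) :
    ∀ᶠ i in l, Integrable fun u => ρ i u • g i u := by
  filter_upwards [hρ.integrable, hgm, hρ.eventually_norm_sub_lt hg one_pos] with i hi hgi hclose
  refine (hi.norm.mul_const (1 + ‖L‖)).mono' (hi.aestronglyMeasurable.smul hgi)
    (ae_of_all _ fun u => ?_)
  rw [norm_smul]
  by_cases hu : ρ i u = 0
  · simp [hu]
  · have : ‖g i u‖ ≤ 1 + ‖L‖ := by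
      linarith [hclose u hu, norm_sub_norm_le (g i u) L]
    gcongr

theorem tendsto_integral_smul [CompleteSpace E] (hρ : IsDeltaNet l ρ)
    (hgm : ∀ᶠ i in l, AEStronglyMeasurable (g i))
    (hg : Tendsto (fun p : ι × ℝ => g p.1 p.2) (l ×ˢ 𝓝 0) (𝓝 L)) :
    Tendsto (fun i => ∫ u, ρ i u • g i u) l (𝓝 L) := by
  obtain ⟨C, hC⟩ := hρ.integral_abs_le
  have hdiff : Tendsto (fun i => (∫ u, ρ i u • g i u) - (∫ u, ρ i u) • L) l (𝓝 0) := by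
    refine Metric.tendsto_nhds.2 fun η hη => ?_
    have hη' : 0 < η / (|C| + 1) := by positivity
    filter_upwards [hρ.integrable, hρ.eventually_integrable_smul hgm hg,
      hρ.eventually_norm_sub_lt hg hη', hC] with i hi hgi hclose hCi
    rw [dist_zero_right, ← integral_smul_const, ← integral_sub hgi (hi.smul_const L)]
    calc ‖∫ u, (ρ i u • g i u - ρ i u • L)‖
        ≤ ∫ u, |ρ i u| * (η / (|C| + 1)) := by
          refine norm_integral_le_of_norm_le (hi.abs.mul_const _) (ae_of_all _ fun u => ?_)
          rw [← smul_sub, norm_smul, Real.norm_eq_abs]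
          by_cases hu : ρ i u = 0
          · simp [hu]
          · exact mul_le_mul_of_nonneg_left (hclose u hu).le (abs_nonneg _)
      _ = (∫ u, |ρ i u|) * (η / (|C| + 1)) := integral_mul_const _ _
      _ < (|C| + 1) * (η / (|C| + 1)) := by
          gcongr
          linarith [le_abs_self C]
      _ = η := mul_div_cancel₀ _ (by positivity)
  simpa using hdiff.add (hρ.tendsto_integral.smul_const L)

end IsDeltaNet

/-- The `x`-component of a background geodesic in the pulse with profile `r`, at rest at `x₀` at
time `t₀`. It is `IsXSol1` for a single profile, with only the regularity that a solution has for
`f` of class `C²`. -/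
structure IsBackgroundGeodesic (f r : ℝ → ℝ) (t₀ x₀ : ℝ) (x : ℝ → ℝ) : Prop where
  contDiff : ContDiff ℝ 2 x
  deriv_deriv : ∀ u, deriv (deriv x) u = r u / 2 * deriv f (x u)
  apply_initial : x t₀ = x₀
  deriv_initial : deriv x t₀ = 0

theorem IsXSol1.isBackgroundGeodesic {f x : ℝ → ℝ} {ρ : ℝ → ℝ → ℝ} {x₀ ε : ℝ}
    (hx : IsXSol1 f ρ x₀ ε x) : IsBackgroundGeodesic f (ρ ε) (-1) x₀ x :=
  ⟨hx.1.of_le (WithTop.coe_le_coe.2 (le_top : (2 : ℕ∞) ≤ ⊤)), hx.2.1, hx.2.2.1, hx.2.2.2⟩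

namespace IsBackgroundGeodesic

variable {f r x : ℝ → ℝ} {t₀ x₀ c d K R : ℝ}

theorem continuous (hx : IsBackgroundGeodesic f r t₀ x₀ x) : Continuous x :=
  hx.contDiff.continuous

theorem continuous_deriv (hx : IsBackgroundGeodesic f r t₀ x₀ x) : Continuous (deriv x) :=
  hx.contDiff.continuous_deriv one_le_two

theorem hasDerivAt (hx : IsBackgroundGeodesic f r t₀ x₀ x) (u : ℝ) :
    HasDerivAt x (deriv x u) u :=
  (hx.contDiff.differentiable two_ne_zero u).hasDerivAt

theorem hasDerivAt_deriv (hx : IsBackgroundGeodesic f r t₀ x₀ x) (u : ℝ) :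
    HasDerivAt (deriv x) (r u / 2 * deriv f (x u)) u :=
  hx.deriv_deriv u ▸ (hx.contDiff.differentiable_deriv_two u).hasDerivAt

theorem hasDerivAt_deriv_comp (hx : IsBackgroundGeodesic f r t₀ x₀ x) (hf : ContDiff ℝ 2 f)
    (u : ℝ) : HasDerivAt (fun t => deriv f (x t)) (deriv (deriv f) (x u) * deriv x u) u :=
  (hf.differentiable_deriv_two (x u)).hasDerivAt.comp u (hx.hasDerivAt u)

theorem deriv_eq_intervalIntegral (hx : IsBackgroundGeodesic f r t₀ x₀ x)
    (hf : ContDiff ℝ 1 f) (hr : Continuous r) (u : ℝ) :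
    deriv x u = ∫ t in t₀..u, r t * (deriv f (x t) / 2) := by
  have := hf.continuous_deriv_one
  have := hx.continuous
  rw [intervalIntegral.integral_eq_sub_of_hasDerivAt (f := deriv x)
    (fun t _ => (hx.hasDerivAt_deriv t).congr_deriv (by ring))
    (Continuous.intervalIntegrable (by fun_prop) _ _), hx.deriv_initial, sub_zero]

theorem abs_deriv_le (hx : IsBackgroundGeodesic f r t₀ x₀ x) (hf : ContDiff ℝ 1 f)
    (hr : Continuous r) (hri : Integrable r) (hK : 0 ≤ K) {u : ℝ}
    (hfK : ∀ t ∈ uIoc t₀ u ∩ Function.support r, |deriv f (x t)| ≤ K) :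
    |deriv x u| ≤ K / 2 * ∫ t, |r t| := by
  have hint : Integrable fun t => K / 2 * |r t| := hri.abs.const_mul _
  rw [hx.deriv_eq_intervalIntegral hf hr, ← integral_const_mul]
  calc |∫ t in t₀..u, r t * (deriv f (x t) / 2)|
      ≤ ∫ t in uIoc t₀ u, |r t * (deriv f (x t) / 2)| :=
        (intervalIntegral.abs_integral_eq_abs_integral_uIoc _).trans_le abs_integral_le_integral_abs
    _ ≤ ∫ t in uIoc t₀ u, K / 2 * |r t| := by
        refine integral_mono_of_nonneg (ae_of_all _ fun t => abs_nonneg _) hint.integrableOn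
          (ae_restrict_of_forall_mem measurableSet_uIoc fun t ht => ?_)
        simp only [abs_mul, abs_div, Nat.abs_ofNat, mul_comm |r t|]
        by_cases hrt : r t = 0
        · simp [hrt]
        · have := hfK t ⟨ht, hrt⟩
          gcongr
    _ ≤ ∫ t, K / 2 * |r t| :=
        setIntegral_le_integral hint (ae_of_all _ fun t => by positivity)

theorem deriv_eq_zero (hx : IsBackgroundGeodesic f r t₀ x₀ x) (hf : ContDiff ℝ 1 f)
    (hr : Continuous r) (hsupp : Function.support r ⊆ Ioi c) (htc : t₀ ≤ c) {u : ℝ} (hu : u ≤ c) :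
    deriv x u = 0 := by
  rw [hx.deriv_eq_intervalIntegral hf hr]
  refine intervalIntegral.integral_zero_ae (ae_of_all _ fun t ht => ?_)
  have hrt : r t = 0 := by
    by_contra hrt
    exact (ht.2.trans (max_le htc hu)).not_gt (hsupp hrt)
  simp [hrt]

theorem apply_eq (hx : IsBackgroundGeodesic f r t₀ x₀ x) (hf : ContDiff ℝ 1 f)
    (hr : Continuous r) (hsupp : Function.support r ⊆ Ioi c) (htc : t₀ ≤ c) : x c = x₀ := by
  have hconst := constant_of_derivWithin_zero (a := t₀) (b := c)
    (hx.contDiff.differentiable two_ne_zero).differentiableOn fun t ht => by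
      rw [(hx.hasDerivAt t).hasDerivWithinAt.derivWithin
        (uniqueDiffOn_Icc (ht.1.trans_lt ht.2) t (Ico_subset_Icc_self ht)),
        hx.deriv_eq_zero hf hr hsupp htc ht.2.le]
  rw [hconst c (right_mem_Icc.2 htc), hx.apply_initial]

theorem deriv_eq_integral (hx : IsBackgroundGeodesic f r t₀ x₀ x) (hf : ContDiff ℝ 1 f)
    (hr : Continuous r) {u : ℝ} (hsupp : Function.support r ⊆ Ioc t₀ u) :
    deriv x u = ∫ t, r t * (deriv f (x t) / 2) := by
  rw [hx.deriv_eq_intervalIntegral hf hr]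
  exact intervalIntegral.integral_eq_integral_of_support_subset fun t ht =>
    hsupp (left_ne_zero_of_mul ht)

theorem abs_sub_lt (hx : IsBackgroundGeodesic f r t₀ x₀ x) (hf : ContDiff ℝ 1 f)
    (hr : Continuous r) (hri : Integrable r) (hsupp : Function.support r ⊆ Ioi c) (htc : t₀ ≤ c)
    (hK : 0 ≤ K) (hfK : ∀ y ∈ Metric.ball x₀ R, |deriv f y| ≤ K)
    (hsmall : K / 2 * (∫ t, |r t|) * (d - c) < R) : ∀ u ∈ Icc c d, |x u - x₀| < R := by
  have hxc := hx.continuous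
  refine lt_of_forall_Ico_lt (by fun_prop) fun u hu hbefore => ?_
  have hvel : ∀ t ∈ Ico c u, ‖deriv x t‖ ≤ K / 2 * ∫ t, |r t| := fun t ht => by
    refine hx.abs_deriv_le hf hr hri hK fun s ⟨hs, hrs⟩ => hfK _ ?_
    rw [uIoc_of_le (htc.trans ht.1)] at hs
    exact hbefore s ⟨(hsupp hrs).le, hs.2.trans_lt ht.2⟩
  calc |x u - x₀| = ‖x u - x c‖ := by rw [hx.apply_eq hf hr hsupp htc, Real.norm_eq_abs]
    _ ≤ K / 2 * (∫ t, |r t|) * (u - c) := norm_image_sub_le_of_norm_deriv_le_segment'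
        (fun t _ => (hx.hasDerivAt t).hasDerivWithinAt) hvel u (right_mem_Icc.2 hu.1)
    _ ≤ K / 2 * (∫ t, |r t|) * (d - c) := by
        have := hu.2
        gcongr
    _ < R := hsmall

theorem abs_deriv_le_of_small (hx : IsBackgroundGeodesic f r t₀ x₀ x) (hf : ContDiff ℝ 1 f)
    (hr : Continuous r) (hri : Integrable r) (hsupp : Function.support r ⊆ Ioo c d) (htc : t₀ ≤ c)
    (hK : 0 ≤ K) (hfK : ∀ y ∈ Metric.ball x₀ R, |deriv f y| ≤ K)
    (hsmall : K / 2 * (∫ t, |r t|) * (d - c) < R) (u : ℝ) :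
    |deriv x u| ≤ K / 2 * ∫ t, |r t| :=
  hx.abs_deriv_le hf hr hri hK fun t ht => hfK _ <|
    hx.abs_sub_lt hf hr hri (hsupp.trans Ioo_subset_Ioi_self) htc hK hfK hsmall t
      (Ioo_subset_Icc_self (hsupp ht.2))

end IsBackgroundGeodesic

namespace IsDeltaNet

variable {ι : Type*} {l : Filter ι} {ρ x : ι → ℝ → ℝ} {f : ℝ → ℝ} {t₀ x₀ : ℝ}

theorem exists_abs_deriv_geodesic_le (hρ : IsDeltaNet l ρ) (hρc : ∀ᶠ i in l, Continuous (ρ i))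
    (hf : ContDiff ℝ 1 f) (ht₀ : t₀ < 0)
    (hx : ∀ᶠ i in l, IsBackgroundGeodesic f (ρ i) t₀ x₀ (x i)) :
    ∃ M, ∀ᶠ i in l, ∀ u, |deriv (x i) u| ≤ M := by
  obtain ⟨C, hC⟩ := hρ.integral_abs_le
  obtain ⟨K, hK⟩ := (isCompact_closedBall x₀ 1).exists_bound_of_continuousOn
    hf.continuous_deriv_one.continuousOn
  have hK₀ : 0 ≤ K := (norm_nonneg _).trans (hK x₀ (by simp))
  have hshort : Tendsto (fun δ : ℝ => K / 2 * C * (δ - -δ)) (𝓝[>] 0) (𝓝 0) :=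
    tendsto_nhdsWithin_of_tendsto_nhds (Continuous.tendsto' (by fun_prop) _ _ (by simp))
  obtain ⟨δ, hδ₀, hδt, hδ⟩ := (eventually_mem_nhdsWithin.and
    ((eventually_nhdsWithin_of_eventually_nhds (eventually_lt_nhds (neg_pos.2 ht₀))).and
      (hshort.eventually_lt_const one_pos))).exists
  rw [mem_Ioi] at hδ₀
  refine ⟨K / 2 * C, ?_⟩
  filter_upwards [hx, hρc, hρ.integrable, hC,
    hρ.eventually_support_subset (Ioo_mem_nhds (neg_lt_zero.2 hδ₀) hδ₀)] with i hxi hr hri hCi hsupp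
  have hmass : K / 2 * ∫ t, |ρ i t| ≤ K / 2 * C := by gcongr
  exact fun u => (hxi.abs_deriv_le_of_small hf hr hri hsupp (by linarith) hK₀
    (fun y hy => hK y (Metric.ball_subset_closedBall hy))
    ((mul_le_mul_of_nonneg_right hmass (by linarith)).trans_lt hδ) u).trans hmass

theorem eventually_deriv_geodesic_eq_zero (hρ : IsDeltaNet l ρ)
    (hρc : ∀ᶠ i in l, Continuous (ρ i)) (hf : ContDiff ℝ 1 f) (ht₀ : t₀ < 0)
    (hx : ∀ᶠ i in l, IsBackgroundGeodesic f (ρ i) t₀ x₀ (x i)) {u : ℝ} (hu : u < 0) :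
    ∀ᶠ i in l, deriv (x i) u = 0 := by
  filter_upwards [hx, hρc, hρ.eventually_support_subset (Ioi_mem_nhds (max_lt ht₀ hu))]
    with i hxi hr hsupp
  exact hxi.deriv_eq_zero hf hr hsupp (le_max_left _ _) (le_max_right _ _)

theorem tendsto_geodesic (hρ : IsDeltaNet l ρ) (hρc : ∀ᶠ i in l, Continuous (ρ i))
    (hf : ContDiff ℝ 1 f) (ht₀ : t₀ < 0)
    (hx : ∀ᶠ i in l, IsBackgroundGeodesic f (ρ i) t₀ x₀ (x i)) :
    Tendsto (fun p : ι × ℝ => x p.1 p.2) (l ×ˢ 𝓝 0) (𝓝 x₀) := by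
  obtain ⟨M, hM⟩ := hρ.exists_abs_deriv_geodesic_le hρc hf ht₀ hx
  refine Metric.tendsto_nhds.2 fun η hη => ?_
  have hclose : Tendsto (fun c : ℝ => M * |0 - c|) (𝓝[<] 0) (𝓝 0) :=
    tendsto_nhdsWithin_of_tendsto_nhds (Continuous.tendsto' (by fun_prop) _ _ (by simp))
  obtain ⟨c, hc₀, htc, hc⟩ := (eventually_mem_nhdsWithin.and
    ((eventually_nhdsWithin_of_eventually_nhds (eventually_gt_nhds ht₀)).and
      (hclose.eventually_lt_const hη))).exists
  have hnear : ∀ᶠ u in 𝓝 (0 : ℝ), M * |u - c| < η :=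
    ContinuousAt.eventually_lt (by fun_prop) continuousAt_const hc
  have hrest : ∀ᶠ i in l, x i c = x₀ ∧ ∀ u, |x i u - x i c| ≤ M * |u - c| := by
    filter_upwards [hx, hρc, hM, hρ.eventually_support_subset (Ioi_mem_nhds hc₀)]
      with i hxi hr hMi hsupp
    exact ⟨hxi.apply_eq hf hr hsupp htc.le, fun u =>
      convex_univ.norm_image_sub_le_of_norm_deriv_le
        (fun t _ => (hxi.hasDerivAt t).differentiableAt) (fun t _ => hMi t)
        (mem_univ c) (mem_univ u)⟩
  filter_upwards [hrest.prod_mk hnear] with ⟨i, u⟩ ⟨⟨hic, hlip⟩, hu⟩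
  rw [Real.dist_eq, ← hic]
  exact (hlip u).trans_lt hu

theorem tendsto_comp_geodesic {E : Type*} [TopologicalSpace E] {F : ℝ → E} (hρ : IsDeltaNet l ρ)
    (hρc : ∀ᶠ i in l, Continuous (ρ i)) (hf : ContDiff ℝ 1 f) (ht₀ : t₀ < 0)
    (hx : ∀ᶠ i in l, IsBackgroundGeodesic f (ρ i) t₀ x₀ (x i)) (hF : ContinuousAt F x₀) :
    Tendsto (fun p : ι × ℝ => F (x p.1 p.2)) (l ×ˢ 𝓝 0) (𝓝 (F x₀)) :=
  hF.tendsto.comp (hρ.tendsto_geodesic hρc hf ht₀ hx)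

theorem tendsto_deriv_geodesic (hρ : IsDeltaNet l ρ) (hρc : ∀ᶠ i in l, Continuous (ρ i))
    (hf : ContDiff ℝ 1 f) (ht₀ : t₀ < 0)
    (hx : ∀ᶠ i in l, IsBackgroundGeodesic f (ρ i) t₀ x₀ (x i)) {u : ℝ} (hu : 0 < u) :
    Tendsto (fun i => deriv (x i) u) l (𝓝 (deriv f x₀ / 2)) := by
  have hf' := hf.continuous_deriv_one
  have hforce : Tendsto (fun i => ∫ t, ρ i t • (deriv f (x i t) / 2)) l (𝓝 (deriv f x₀ / 2)) :=
    hρ.tendsto_integral_smul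
      (hx.mono fun i hxi => ((hf'.comp hxi.continuous).div_const 2).aestronglyMeasurable)
      ((hρ.tendsto_comp_geodesic hρc hf ht₀ hx hf'.continuousAt).div_const 2)
  refine hforce.congr' ?_
  filter_upwards [hx, hρc, hρ.eventually_support_subset (Ioc_mem_nhds ht₀ hu)] with i hxi hr hsupp
  exact (hxi.deriv_eq_integral hf hr hsupp).symm

theorem tendsto_integral_deriv_geodesic_sq_mul [l.IsCountablyGenerated] (hρ : IsDeltaNet l ρ)
    (hρc : ∀ᶠ i in l, Continuous (ρ i)) (hf : ContDiff ℝ 1 f) (ht₀ : t₀ < 0)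
    (hx : ∀ᶠ i in l, IsBackgroundGeodesic f (ρ i) t₀ x₀ (x i)) {ψ : ℝ → ℝ} (hψ : Integrable ψ) :
    Tendsto (fun i => ∫ u, deriv (x i) u ^ 2 * ψ u) l
      (𝓝 ((deriv f x₀ / 2) ^ 2 * ∫ u in Ioi 0, ψ u)) := by
  obtain ⟨M, hM⟩ := hρ.exists_abs_deriv_geodesic_le hρc hf ht₀ hx
  rw [← integral_const_mul, ← integral_indicator measurableSet_Ioi]
  refine tendsto_integral_filter_of_dominated_convergence (fun u => M ^ 2 * |ψ u|)
    (hx.mono fun i hxi => (hxi.continuous_deriv.pow 2).aestronglyMeasurable.mul hψ.1) ?_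
    (hψ.abs.const_mul _) ?_
  · filter_upwards [hM] with i hMi
    refine ae_of_all _ fun u => ?_
    have := hMi u
    rw [norm_mul, norm_pow, Real.norm_eq_abs, Real.norm_eq_abs]
    gcongr
  · filter_upwards [Measure.ae_ne volume 0] with u hu
    rcases hu.lt_or_gt with hneg | hpos
    · rw [indicator_of_notMem (notMem_Ioi.2 hneg.le)]
      refine tendsto_const_nhds.congr' ?_
      filter_upwards [hρ.eventually_deriv_geodesic_eq_zero hρc hf ht₀ hx hneg] with i hi
      simp [hi]
    · rw [indicator_of_mem (mem_Ioi.2 hpos)]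
      exact ((hρ.tendsto_deriv_geodesic hρc hf ht₀ hx hpos).pow 2).mul_const _

end IsDeltaNet

/-- A solution of class `C²` of the regularized Jacobi system along `x` which vanishes at time `t₀`
and has derivative `(a, b, 0)` there in the `u`-, `v`- and `x`-directions. The `y`-component is
decoupled from the others and carries no initial data. -/
structure IsJacobiField (f r x : ℝ → ℝ) (t₀ a b : ℝ) (Nu Nv Nx Ny : ℝ → ℝ) : Prop where
  contDiff_u : ContDiff ℝ 2 Nu
  contDiff_v : ContDiff ℝ 2 Nv
  contDiff_x : ContDiff ℝ 2 Nx
  jacobiEqs : JacobiEqs f r x Nu Nv Nx Ny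
  u_initial : Nu t₀ = 0
  v_initial : Nv t₀ = 0
  x_initial : Nx t₀ = 0
  deriv_u_initial : deriv Nu t₀ = a
  deriv_v_initial : deriv Nv t₀ = b
  deriv_x_initial : deriv Nx t₀ = 0

namespace IsJacobiField

variable {f r x Nu Nv Nx Ny : ℝ → ℝ} {t₀ x₀ a b : ℝ}

theorem u_eq (hN : IsJacobiField f r x t₀ a b Nu Nv Nx Ny) : Nu = fun u => a * (u - t₀) :=
  eq_of_hasDerivAt_smul_add (q := 0) (p := 0) continuous_const
    (fun t => (hN.contDiff_u.differentiable two_ne_zero t).hasDerivAt)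
    (fun t => by
      simpa [hN.jacobiEqs.1 t] using (hN.contDiff_u.differentiable_deriv_two t).hasDerivAt)
    (fun t => hasDerivAt_const_mul_sub_const a t₀ t)
    (fun t => by simpa using hasDerivAt_const t a)
    (by simp [hN.u_initial]) hN.deriv_u_initial

theorem x_eq (hN : IsJacobiField f r x t₀ a b Nu Nv Nx Ny)
    (hx : IsBackgroundGeodesic f r t₀ x₀ x) (hf : ContDiff ℝ 2 f) (hr : Differentiable ℝ r) :
    Nx = fun u => a * (u - t₀) * deriv x u := by
  have hxc := hx.continuous
  have hrc := hr.continuous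
  have := (hf.deriv' (n := 1)).continuous_deriv_one
  have hJ := hN.jacobiEqs.2.2.1
  rw [hN.u_eq] at hJ
  have hw := hasDerivAt_const_mul_sub_const a t₀
  refine eq_of_hasDerivAt_smul_add (q := fun t => r t / 2 * deriv (deriv f) (x t))
    (p := fun t => a * deriv f (x t) * r t + 1 / 2 * deriv f (x t) * (a * (t - t₀)) * deriv r t)
    (by fun_prop) (fun t => (hN.contDiff_x.differentiable two_ne_zero t).hasDerivAt) (fun t => ?_)
    (fun t => (hw t).mul (hx.hasDerivAt_deriv t)) (fun t => ?_)
    (t₀ := t₀) (by simp [hN.x_initial]) (by simp [hN.deriv_x_initial, hx.deriv_initial])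
  · refine (hN.contDiff_x.differentiable_deriv_two t).hasDerivAt.congr_deriv ?_
    rw [hJ, (hw t).deriv, smul_eq_mul]
    ring
  · refine (((hx.hasDerivAt_deriv t).const_mul a).add ((hw t).mul
      (((hr t).hasDerivAt.div_const 2).mul (hx.hasDerivAt_deriv_comp hf t)))).congr_deriv ?_
    simp only [Pi.mul_apply, smul_eq_mul]
    ring

theorem hasDerivAt_x_mul_force (hN : IsJacobiField f r x t₀ a b Nu Nv Nx Ny)
    (hx : IsBackgroundGeodesic f r t₀ x₀ x) (hf : ContDiff ℝ 2 f) (hr : Differentiable ℝ r)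
    (u : ℝ) :
    HasDerivAt (fun t => Nx t * deriv f (x t) * r t)
      (a * deriv x u * deriv f (x u) * r u
        + a * (u - t₀) * (deriv (deriv x) u * deriv f (x u) * r u
          + deriv (deriv f) (x u) * deriv x u ^ 2 * r u
          + deriv x u * deriv f (x u) * deriv r u)) u := by
  rw [hN.x_eq hx hf hr, hx.deriv_deriv]
  refine ((((hasDerivAt_const_mul_sub_const a t₀ u).mul (hx.hasDerivAt_deriv u)).mul
    (hx.hasDerivAt_deriv_comp hf u)).mul (hr u).hasDerivAt).congr_deriv ?_
  simp only [Pi.mul_apply]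
  ring

theorem v_eq (hN : IsJacobiField f r x t₀ a b Nu Nv Nx Ny)
    (hx : IsBackgroundGeodesic f r t₀ x₀ x) (hf : ContDiff ℝ 2 f) (hr : ContDiff ℝ 2 r)
    (hr₀ : r t₀ = 0) :
    Nv = fun u => a * (u - t₀) * f (x u) * r u + a * (u - t₀) * deriv x u ^ 2 + b * (u - t₀) := by
  have hrd := hr.differentiable two_ne_zero
  have hNx := hN.x_eq hx hf hrd
  have hJ := hN.jacobiEqs.2.2.2
  rw [hN.u_eq] at hJ
  set S : ℝ → ℝ := fun t => a * (t - t₀) * f (x t) * r t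
  have hSc : ContDiff ℝ 2 S := by
    have := hx.contDiff
    fun_prop
  have hS₀ : deriv S t₀ = 0 := by
    refine HasDerivAt.deriv ((((hasDerivAt_const_mul_sub_const a t₀ t₀).mul
      ((hf.differentiable two_ne_zero (x t₀)).hasDerivAt.comp t₀ (hx.hasDerivAt t₀))).mul
      (hrd t₀).hasDerivAt).congr_deriv ?_)
    simp [hr₀]
  refine eq_of_hasDerivAt_smul_add (q := 0) (p := deriv (deriv Nv)) continuous_const
    (h' := fun t => deriv S t + (a * deriv x t ^ 2 + Nx t * deriv f (x t) * r t) + b) (t₀ := t₀)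
    (fun t => (hN.contDiff_v.differentiable two_ne_zero t).hasDerivAt)
    (fun t => by simpa using (hN.contDiff_v.differentiable_deriv_two t).hasDerivAt)
    (fun t => ?_) (fun t => ?_) (by simp [hN.v_initial])
    (by simp [hN.deriv_v_initial, hS₀, hx.deriv_initial, hr₀])
  · refine (((hSc.differentiable two_ne_zero t).hasDerivAt.add
      ((hasDerivAt_const_mul_sub_const a t₀ t).mul ((hx.hasDerivAt_deriv t).pow 2))).add
      (hasDerivAt_const_mul_sub_const b t₀ t)).congr_deriv ?_
    simp only [hNx, Pi.pow_apply]
    push_cast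
    ring
  · have hforce := hN.hasDerivAt_x_mul_force hx hf hrd t
    refine (((hSc.differentiable_deriv_two t).hasDerivAt.add
      ((((hx.hasDerivAt_deriv t).pow 2).const_mul a).add hforce)).add_const b).congr_deriv ?_
    rw [Pi.zero_apply, zero_smul, zero_add, hJ, hforce.deriv, hx.deriv_deriv]
    simp only [hNx]
    push_cast
    ring

end IsJacobiField

theorem jacobi_Nv_distributional_limit_case1_general {ι : Type*} {l : Filter ι}
    [l.IsCountablyGenerated] {f : ℝ → ℝ} (hf : ContDiff ℝ 2 f) {ρ : ι → ℝ → ℝ}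
    (hρ : IsDeltaNet l ρ) (hρc : ∀ᶠ i in l, ContDiff ℝ 2 (ρ i)) {t₀ x₀ a b : ℝ} (ht₀ : t₀ < 0)
    {x : ι → ℝ → ℝ} (hx : ∀ᶠ i in l, IsBackgroundGeodesic f (ρ i) t₀ x₀ (x i))
    {Nu Nv Nx Ny : ι → ℝ → ℝ}
    (hN : ∀ᶠ i in l, IsJacobiField f (ρ i) (x i) t₀ a b (Nu i) (Nv i) (Nx i) (Ny i))
    {φ : ℝ → ℝ} (hφ : Integrable fun u => (u - t₀) * φ u) (hφ₀ : ContinuousAt φ 0) :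
    Tendsto (fun i => ∫ u, Nv i u * φ u) l
      (𝓝 (b * (∫ u, (u - t₀) * φ u) + a * -t₀ * f x₀ * φ 0
        + 1 / 4 * a * deriv f x₀ ^ 2 * ∫ u in Ioi 0, (u - t₀) * φ u)) := by
  have hf₁ : ContDiff ℝ 1 f := hf.of_le one_le_two
  have hρ₀ : ∀ᶠ i in l, Continuous (ρ i) := hρc.mono fun _ h => h.continuous
  have hgm : ∀ᶠ i in l, AEStronglyMeasurable fun u => f (x i u) * ((u - t₀) * φ u) :=
    hx.mono fun i hxi => (hf.continuous.comp hxi.continuous).aestronglyMeasurable.mul hφ.1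
  have hg : Tendsto (fun p : ι × ℝ => f (x p.1 p.2) * ((p.2 - t₀) * φ p.2)) (l ×ˢ 𝓝 0)
      (𝓝 (f x₀ * ((0 - t₀) * φ 0))) :=
    (hρ.tendsto_comp_geodesic hρ₀ hf₁ ht₀ hx hf.continuous.continuousAt).mul
      (((continuousAt_id.sub continuousAt_const).mul hφ₀).tendsto.comp tendsto_snd)
  have hpulse := hρ.tendsto_integral_smul hgm hg
  have hkink := hρ.tendsto_integral_deriv_geodesic_sq_mul hρ₀ hf₁ ht₀ hx hφ
  obtain ⟨M, hM⟩ := hρ.exists_abs_deriv_geodesic_le hρ₀ hf₁ ht₀ hx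
  have hsum := (tendsto_const_nhds (x := b * ∫ u, (u - t₀) * φ u)).add
    ((hpulse.const_mul a).add (hkink.const_mul a))
  convert hsum.congr' ?_ using 2
  · ring
  filter_upwards [hx, hN, hρc, hM, hρ.eventually_integrable_smul hgm hg,
    hρ.eventually_support_subset (compl_singleton_mem_nhds ht₀.ne')]
    with i hxi hNi hr hMi hint hsupp
  have hint' : Integrable fun u => deriv (x i) u ^ 2 * ((u - t₀) * φ u) :=
    hφ.bdd_mul (c := M ^ 2) (hxi.continuous_deriv.pow 2).aestronglyMeasurable
      (ae_of_all _ fun u => by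
        rw [norm_pow]; exact pow_le_pow_left₀ (norm_nonneg _) (hMi u) 2)
  have hint_add : Integrable fun u =>
      a * (ρ i u • (f (x i u) * ((u - t₀) * φ u))) + a * (deriv (x i) u ^ 2 * ((u - t₀) * φ u)) :=
    (hint.const_mul a).add (hint'.const_mul a)
  have hr₀ : ρ i t₀ = 0 := by_contra fun h => hsupp h rfl
  rw [← integral_const_mul, ← integral_const_mul, ← integral_const_mul,
    ← integral_add (hint.const_mul a) (hint'.const_mul a),
    ← integral_add (hφ.const_mul b) hint_add,
    hNi.v_eq hxi hf hr hr₀]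
  refine integral_congr_ae (ae_of_all _ fun u => ?_)
  simp only [smul_eq_mul]
  ring

/-- With initial conditions `N(-1) = 0`, `Ṅ(-1) = (a,b,0,0)`, the `v`-component `Nᵛ_ε` of
the Jacobi field converges distributionally to
`b(1+u) + a[f(x₀)δ(u) + ¼ f'(x₀)²(θ(u) + u₊)]`: a kink, a jump and a δ-like pulse. -/
theorem jacobi_Nv_distributional_limit_case1 (f : ℝ → ℝ) (hf : ContDiff ℝ (⊤ : ℕ∞) f)
    (ρ : ℝ → ℝ → ℝ) (hρ : IsGenDeltaNet ρ) (x₀ a b : ℝ)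
    (ε₀ : ℝ) (hε₀ : ε₀ ∈ Ioo (0:ℝ) 1) (x : ℝ → ℝ → ℝ)
    (hx : ∀ ε ∈ Ioo 0 ε₀, IsXSol1 f ρ x₀ ε (x ε))
    (Nu Nv Nx Ny : ℝ → ℝ → ℝ)
    (hN : ∀ ε ∈ Ioo 0 ε₀,
      (ContDiff ℝ (⊤ : ℕ∞) (Nu ε) ∧ ContDiff ℝ (⊤ : ℕ∞) (Nv ε) ∧
       ContDiff ℝ (⊤ : ℕ∞) (Nx ε) ∧ ContDiff ℝ (⊤ : ℕ∞) (Ny ε)) ∧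
      JacobiEqs f (ρ ε) (x ε) (Nu ε) (Nv ε) (Nx ε) (Ny ε) ∧
      (Nu ε (-1) = 0 ∧ Nv ε (-1) = 0 ∧ Nx ε (-1) = 0 ∧ Ny ε (-1) = 0) ∧
      (deriv (Nu ε) (-1) = a ∧ deriv (Nv ε) (-1) = b ∧
       deriv (Nx ε) (-1) = 0 ∧ deriv (Ny ε) (-1) = 0)) :
    ∀ φ : ℝ → ℝ, ContDiff ℝ (⊤ : ℕ∞) φ → HasCompactSupport φ →
      Tendsto (fun ε => ∫ u, Nv ε u * φ u) (nhdsWithin 0 (Ioo 0 ε₀))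
        (nhds (b * (∫ u, (1 + u) * φ u) + a * f x₀ * φ 0
          + (1 / 4) * a * (deriv f x₀) ^ 2 * ∫ u in Ioi (0:ℝ), (1 + u) * φ u)) := by
  intro φ hφ hφc
  have htwo : (2 : WithTop ℕ∞) ≤ (⊤ : ℕ∞) := WithTop.coe_le_coe.2 (le_top : (2 : ℕ∞) ≤ ⊤)
  have hmem : ∀ᶠ ε in 𝓝[Ioo 0 ε₀] (0 : ℝ), ε ∈ Ioo 0 ε₀ := eventually_mem_nhdsWithin
  have hsub : Ioo 0 ε₀ ⊆ Ioo 0 1 := Ioo_subset_Ioo_right hε₀.2.le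
  have hψ : Integrable fun u => (u - -1) * φ u :=
    Continuous.integrable_of_hasCompactSupport (by have := hφ.continuous; fun_prop) hφc.mul_left
  have hJacobi : ∀ᶠ ε in 𝓝[Ioo 0 ε₀] (0 : ℝ), IsJacobiField f (ρ ε) (x ε) (-1) a b
      (Nu ε) (Nv ε) (Nx ε) (Ny ε) := hmem.mono fun ε hε => by
    obtain ⟨⟨hu, hv, hx, -⟩, hJ, ⟨hu₀, hv₀, hx₀, -⟩, hu₁, hv₁, hx₁, -⟩ := hN ε hε
    exact ⟨hu.of_le htwo, hv.of_le htwo, hx.of_le htwo, hJ, hu₀, hv₀, hx₀, hu₁, hv₁, hx₁⟩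
  simpa [add_comm] using jacobi_Nv_distributional_limit_case1_general (hf.of_le htwo)
    (hρ.isDeltaNet hsub) (hmem.mono fun ε hε => (hρ.1 ε (hsub hε)).of_le htwo) neg_one_lt_zero
    (hmem.mono fun ε hε => (hx ε hε).isBackgroundGeodesic) hJacobi hψ hφ.continuous.continuousAt
end
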